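/- Let f : 𝔹 → ℂ be holomorphic with f(0) = 1, let F(x) = f(x)·x, and assume ‖F‖_B = 1, where ‖F‖_B = ‖F(0)‖ + sup_{x ∈ 𝔹, x ≠ 0} (1−‖x‖²)·‖DF(x)x‖/‖x‖. Then F is biholomorphic on the ball B_{1/√3} = {x ∈ X : ‖x‖ < 1/√3} and F(B_{1/√3}) contains the ball B_{√3/4} = {y ∈ X : ‖y‖ < √3/4}. -/

import Mathlib

open Metric Set

noncomputable section

/-- A holomorphic map is biholomorphic on an open set `s` if it is holomorphic and injective
on `s` and admits a holomorphic inverse on the image `f '' s`. -/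
def IsBiholoOn {E₁ E₂ : Type*} [NormedAddCommGroup E₁] [NormedSpace ℂ E₁]
    [NormedAddCommGroup E₂] [NormedSpace ℂ E₂] (f : E₁ → E₂) (s : Set E₁) : Prop :=
  DifferentiableOn ℂ f s ∧ Set.InjOn f s ∧
    ∃ g : E₂ → E₁, DifferentiableOn ℂ g (f '' s) ∧ ∀ x ∈ s, g (f x) = x

/-- The Bloch (semi-)norm `‖F‖_B = ‖F(0)‖ + sup_{x ∈ 𝔹, x ≠ 0} (1−‖x‖²)‖DF(x)x‖/‖x‖`
of a holomorphic mapping on the unit ball. -/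
def blochNorm {X : Type*} [NormedAddCommGroup X] [NormedSpace ℂ X] (F : X → X) : ℝ :=
  ‖F 0‖ + ⨆ x : {x : X // x ∈ ball (0 : X) 1 ∧ x ≠ 0},
    (1 - ‖x.1‖ ^ 2) * ‖fderiv ℂ F x.1 x.1‖ / ‖x.1‖

/-!
Restricting `F x = f x • x` to a complex line through the origin gives a one-variable function
`φ z = z * f (z • u)` with `φ' 0 = 1` and `(1 - ‖z‖ ^ 2) * ‖φ' z‖ ≤ 1`, so injectivity, covering and
nondegeneracy of the derivative of `F` reduce to Bonk's distortion theorem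
`Re (φ' z) ≥ 3 (√3 - 3 ‖z‖) / (√3 - ‖z‖) ^ 3`. A Möbius map carries the unit disc onto a disc
tangent to the imaginary axis at `0`; transported through it with a suitable weight, `φ'` becomes a
self-map of the unit disc with boundary fixed point `1`. Its derivative there has real part `1`
because `‖φ' z‖` times the Bloch weight is maximal at `0`, and Julia's inequality on the real
diameter is the distortion theorem. Positivity of `Re φ'` on `‖z‖ < 1 / √3` gives injectivity, and
integration along radii gives `‖φ z - φ 0‖ ≥ √3 / 4` on `‖z‖ = 1 / √3`, hence the covering.

The inverse of `F` is continuous because a Hurwitz argument in the scaling parameter of each line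
shows that `F` is open, and a continuous local inverse is differentiable wherever the derivative is
invertible.
-/

open Filter Function Topology ComplexConjugate

section SchwarzPick

/-- The Blaschke factor `z ↦ (z - a) / (1 - ā z)`: for `‖a‖ < 1`, the Möbius automorphism of the
unit disc taking `a` to `0`, used to recentre the Schwarz lemma. -/
def blaschkeFactor (a z : ℂ) : ℂ := (z - a) / (1 - conj a * z)

variable {a z : ℂ}

lemma norm_one_sub_conj_mul_sq_sub (a z : ℂ) :
    ‖1 - conj a * z‖ ^ 2 - ‖z - a‖ ^ 2 = (1 - ‖a‖ ^ 2) * (1 - ‖z‖ ^ 2) := by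
  simp only [Complex.sq_norm, Complex.normSq_apply, Complex.sub_re, Complex.sub_im, Complex.mul_re,
    Complex.mul_im, Complex.conj_re, Complex.conj_im, Complex.one_re, Complex.one_im]
  ring

lemma one_sub_conj_mul_ne_zero (ha : ‖a‖ < 1) (hz : ‖z‖ ≤ 1) : 1 - conj a * z ≠ 0 := by
  refine sub_ne_zero.mpr fun h => ?_
  have hlt : ‖conj a * z‖ < 1 := by
    rw [norm_mul, RCLike.norm_conj]
    exact mul_lt_one_of_nonneg_of_lt_one_left (norm_nonneg a) ha hz
  simp [← h] at hlt

lemma one_sub_norm_blaschkeFactor_sq (ha : ‖a‖ < 1) (hz : ‖z‖ ≤ 1) :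
    1 - ‖blaschkeFactor a z‖ ^ 2 = (1 - ‖a‖ ^ 2) * (1 - ‖z‖ ^ 2) / ‖1 - conj a * z‖ ^ 2 := by
  have hne : ‖1 - conj a * z‖ ≠ 0 := norm_ne_zero_iff.mpr (one_sub_conj_mul_ne_zero ha hz)
  rw [blaschkeFactor, norm_div, div_pow, one_sub_div (pow_ne_zero 2 hne),
    norm_one_sub_conj_mul_sq_sub]

lemma norm_blaschkeFactor_le_one (ha : ‖a‖ < 1) (hz : ‖z‖ ≤ 1) : ‖blaschkeFactor a z‖ ≤ 1 := by
  have hnonneg : 0 ≤ 1 - ‖blaschkeFactor a z‖ ^ 2 := by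
    rw [one_sub_norm_blaschkeFactor_sq ha hz]
    have ha' : 0 ≤ 1 - ‖a‖ ^ 2 := by nlinarith [norm_nonneg a]
    have hz' : 0 ≤ 1 - ‖z‖ ^ 2 := by nlinarith [norm_nonneg z]
    positivity
  exact (sq_le_one_iff₀ (norm_nonneg _)).mp (by linarith)

lemma norm_blaschkeFactor_lt_one (ha : ‖a‖ < 1) (hz : ‖z‖ < 1) : ‖blaschkeFactor a z‖ < 1 := by
  have hpos : 0 < 1 - ‖blaschkeFactor a z‖ ^ 2 := by
    rw [one_sub_norm_blaschkeFactor_sq ha hz.le]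
    have hne := one_sub_conj_mul_ne_zero ha hz.le
    have ha' : 0 < 1 - ‖a‖ ^ 2 := by nlinarith [norm_nonneg a]
    have hz' : 0 < 1 - ‖z‖ ^ 2 := by nlinarith [norm_nonneg z]
    positivity
  exact (sq_lt_one_iff₀ (norm_nonneg _)).mp (by linarith)

lemma differentiableOn_blaschkeFactor (ha : ‖a‖ < 1) :
    DifferentiableOn ℂ (blaschkeFactor a) (closedBall 0 1) :=
  DifferentiableOn.div (by fun_prop) (by fun_prop) fun _ hz =>
    one_sub_conj_mul_ne_zero ha (mem_closedBall_zero_iff.mp hz)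

lemma blaschkeFactor_neg_blaschkeFactor (ha : ‖a‖ < 1) (hz : ‖z‖ < 1) :
    blaschkeFactor (-a) (blaschkeFactor a z) = z := by
  have hcancel : blaschkeFactor a z * (1 - conj a * z) = z - a :=
    div_mul_cancel₀ _ (one_sub_conj_mul_ne_zero ha hz.le)
  have hne := one_sub_conj_mul_ne_zero (a := -a) (by rwa [norm_neg])
    (norm_blaschkeFactor_lt_one ha hz).le
  rw [blaschkeFactor, div_eq_iff hne, map_neg]
  linear_combination hcancel

variable {G : ℂ → ℂ} {s t : ℂ}

theorem norm_blaschkeFactor_map_le (hG : DifferentiableOn ℂ G (ball 0 1))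
    (hmaps : MapsTo G (ball 0 1) (closedBall 0 1)) (hs : ‖s‖ < 1) (ht : ‖t‖ < 1)
    (hGt : ‖G t‖ < 1) :
    ‖blaschkeFactor (G t) (G s)‖ ≤ ‖blaschkeFactor t s‖ := by
  have ht' : ‖-t‖ < 1 := by rwa [norm_neg]
  have hT : MapsTo (blaschkeFactor (-t)) (ball 0 1) (ball 0 1) := fun z hz =>
    mem_ball_zero_iff.mpr (norm_blaschkeFactor_lt_one ht' (mem_ball_zero_iff.mp hz))
  have hdiff : DifferentiableOn ℂ (blaschkeFactor (G t) ∘ G ∘ blaschkeFactor (-t)) (ball 0 1) :=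
    (differentiableOn_blaschkeFactor hGt).comp
      (hG.comp ((differentiableOn_blaschkeFactor ht').mono ball_subset_closedBall) hT)
      (hmaps.comp hT)
  have hbound : MapsTo (blaschkeFactor (G t) ∘ G ∘ blaschkeFactor (-t))
      (ball 0 1) (closedBall 0 1) := fun z hz =>
    mem_closedBall_zero_iff.mpr
      (norm_blaschkeFactor_le_one hGt (mem_closedBall_zero_iff.mp (hmaps (hT hz))))
  have hschwarz := Complex.norm_le_norm_of_mapsTo_ball hdiff hbound
    (by simp [blaschkeFactor]) (norm_blaschkeFactor_lt_one ht hs)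
  simpa only [comp_apply, blaschkeFactor_neg_blaschkeFactor ht hs] using hschwarz

theorem schwarz_pick (hG : DifferentiableOn ℂ G (ball 0 1))
    (hmaps : MapsTo G (ball 0 1) (closedBall 0 1)) (hs : ‖s‖ < 1) (ht : ‖t‖ < 1) :
    (1 - ‖t‖ ^ 2) * (1 - ‖s‖ ^ 2) * ‖1 - conj (G t) * G s‖ ^ 2 ≤
      (1 - ‖G t‖ ^ 2) * (1 - ‖G s‖ ^ 2) * ‖1 - conj t * s‖ ^ 2 := by
  have hnorm : ∀ z, ‖z‖ < 1 → ‖G z‖ ≤ 1 := fun z hz =>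
    mem_closedBall_zero_iff.mp (hmaps (mem_ball_zero_iff.mpr hz))
  rcases (hnorm t ht).lt_or_eq with hGt | hGt
  · have hle : 1 - ‖blaschkeFactor t s‖ ^ 2 ≤ 1 - ‖blaschkeFactor (G t) (G s)‖ ^ 2 := by
      gcongr
      exact norm_blaschkeFactor_map_le hG hmaps hs ht hGt
    have hpos := norm_pos_iff.mpr (one_sub_conj_mul_ne_zero ht hs.le)
    have hpos' := norm_pos_iff.mpr (one_sub_conj_mul_ne_zero hGt (hnorm s hs))
    rwa [one_sub_norm_blaschkeFactor_sq ht hs.le,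
      one_sub_norm_blaschkeFactor_sq hGt (hnorm s hs),
      div_le_div_iff₀ (by positivity) (by positivity)] at hle
  · have hmax : IsMaxOn (norm ∘ G) (ball 0 1) t := fun z hz => by
      simpa [hGt] using hnorm z (mem_ball_zero_iff.mp hz)
    have hconst : G s = G t :=
      Complex.eqOn_of_isPreconnected_of_isMaxOn_norm (convex_ball 0 1).isPreconnected isOpen_ball hG
        (mem_ball_zero_iff.mpr ht) hmax (mem_ball_zero_iff.mpr hs)
    have hone : conj (G t) * G t = 1 := by rw [Complex.conj_mul', hGt]; norm_num
    simp [hconst, hGt, hone]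

lemma tendsto_one_sub_norm_sq_div_one_sub {g' : ℂ} (hG1 : G 1 = 1) (hg' : HasDerivAt G g' 1) :
    Tendsto (fun t : ℝ => (1 - ‖G t‖ ^ 2) / (1 - t)) (𝓝[<] 1) (𝓝 (2 * g'.re)) := by
  have hreal : HasDerivAt (fun t : ℝ => G t) g' 1 :=
    HasDerivAt.comp_ofReal (by rwa [Complex.ofReal_one])
  have hsq : HasDerivAt (fun t : ℝ => ‖G t‖ ^ 2) (2 * g'.re) 1 := by
    simpa [hG1, Complex.inner] using hreal.norm_sq
  refine (hsq.tendsto_slope.mono_left (nhdsWithin_mono 1 fun t ht => ne_of_lt ht)).congr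
    fun t => ?_
  rw [slope_def_field, ← neg_div_neg_eq, neg_sub, neg_sub]
  simp [hG1]

-- Divide the Schwarz–Pick inequality between `s` and real `t` by `1 - t` and let `t` tend to `1`.
theorem julia_inequality {g' : ℂ} (hG : DifferentiableOn ℂ G (ball 0 1))
    (hmaps : MapsTo G (ball 0 1) (closedBall 0 1)) (hG1 : G 1 = 1) (hg' : HasDerivAt G g' 1)
    (hs : ‖s‖ < 1) :
    (1 - ‖s‖ ^ 2) * ‖1 - G s‖ ^ 2 ≤ g'.re * (1 - ‖G s‖ ^ 2) * ‖1 - s‖ ^ 2 := by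
  have hpick : ∀ᶠ t : ℝ in 𝓝[<] 1, (1 + t) * (1 - ‖s‖ ^ 2) * ‖1 - conj (G t) * G s‖ ^ 2 ≤
      (1 - ‖G t‖ ^ 2) / (1 - t) * (1 - ‖G s‖ ^ 2) * ‖1 - t * s‖ ^ 2 := by
    filter_upwards [Ioo_mem_nhdsLT (neg_one_lt_zero.trans one_pos)] with t ⟨ht0, ht1⟩
    have hnt : ‖(t : ℂ)‖ < 1 := by simpa [abs_lt] using ⟨ht0, ht1⟩
    have hle := schwarz_pick hG hmaps hs hnt
    rw [Complex.conj_ofReal, Complex.norm_real, Real.norm_eq_abs, sq_abs] at hle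
    rw [div_mul_eq_mul_div, div_mul_eq_mul_div, le_div_iff₀ (sub_pos.mpr ht1)]
    linarith
  have hid : Tendsto (fun t : ℝ => (t : ℂ)) (𝓝[<] 1) (𝓝 1) :=
    (Complex.continuous_ofReal.tendsto' 1 1 Complex.ofReal_one).mono_left nhdsWithin_le_nhds
  have hGconj : Tendsto (fun t : ℝ => conj (G t)) (𝓝[<] 1) (𝓝 1) := by
    have hcont := hg'.continuousAt.tendsto.comp hid
    simpa [comp_def, hG1] using hcont.star
  have hlim : Tendsto (fun t : ℝ => (1 + t) * (1 - ‖s‖ ^ 2) * ‖1 - conj (G t) * G s‖ ^ 2)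
      (𝓝[<] 1) (𝓝 ((1 + 1) * (1 - ‖s‖ ^ 2) * ‖1 - 1 * G s‖ ^ 2)) :=
    (((tendsto_id.mono_left nhdsWithin_le_nhds).const_add 1).mul_const _).mul
      (((hGconj.mul_const _).const_sub 1).norm.pow 2)
  have hle := le_of_tendsto_of_tendsto hlim
    (((tendsto_one_sub_norm_sq_div_one_sub hG1 hg').mul_const _).mul
      (((hid.mul_const s).const_sub 1).norm.pow 2)) hpick
  rw [one_mul, one_mul] at hle
  linarith

theorem le_re_of_boundary_deriv_re_eq_one {g' : ℂ} (hG : DifferentiableOn ℂ G (ball 0 1))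
    (hmaps : MapsTo G (ball 0 1) (closedBall 0 1)) (hG1 : G 1 = 1) (hg' : HasDerivAt G g' 1)
    (hg're : g'.re = 1) {s : ℝ} (hs : |s| < 1) : s ≤ (G s).re := by
  have hjulia := julia_inequality hG hmaps hG1 hg' (s := s) (by simpa using hs)
  have hs1 : 0 < 1 - s := sub_pos.mpr (abs_lt.mp hs).2
  by_contra! hlt
  have hmul : (1 - s) * (2 * ((1 - (G s).re) * (s - (G s).re) + (G s).im ^ 2)) ≤ 0 := by
    simp only [hg're, one_mul, Complex.sq_norm, Complex.normSq_apply, Complex.sub_re,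
      Complex.sub_im, Complex.one_re, Complex.one_im, Complex.ofReal_re, Complex.ofReal_im]
      at hjulia
    linarith
  have hpos : 0 < (1 - (G s).re) * (s - (G s).re) := by
    apply mul_pos <;> linarith
  exact hmul.not_gt (by positivity)

end SchwarzPick

section NoshiroWarschawski

variable {φ : ℂ → ℂ} {s : Set ℂ}

lemma hasDerivAt_re_lineMap_div {φ' a d : ℂ} {t : ℝ} (hd : d ≠ 0)
    (hφ : HasDerivAt φ φ' (a + t * d)) :
    HasDerivAt (fun t : ℝ => (φ (a + t * d) / d).re) φ'.re t := by
  have hline : HasDerivAt (fun z : ℂ => a + z * d) d (t : ℂ) := by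
    simpa using ((hasDerivAt_id (t : ℂ)).mul_const d).const_add a
  have hcomp := (HasDerivAt.comp (t : ℂ) hφ hline).div_const d
  rw [mul_div_cancel_right₀ _ hd] at hcomp
  exact hcomp.real_of_complex

theorem injOn_of_forall_re_deriv_pos (hs : Convex ℝ s) (hφ : ∀ z ∈ s, DifferentiableAt ℂ φ z)
    (hpos : ∀ z ∈ s, 0 < (deriv φ z).re) : InjOn φ s := by
  intro a ha b hb hab
  by_contra hne
  have hseg : ∀ t ∈ Icc (0 : ℝ) 1, a + t * (b - a) ∈ s := fun t ht => by
    simpa using hs.add_smul_sub_mem ha hb ht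
  have hder : ∀ t ∈ Icc (0 : ℝ) 1, HasDerivAt (fun t : ℝ => (φ (a + t * (b - a)) / (b - a)).re)
      (deriv φ (a + t * (b - a))).re t := fun t ht =>
    hasDerivAt_re_lineMap_div (sub_ne_zero.mpr (Ne.symm hne)) (hφ _ (hseg t ht)).hasDerivAt
  have hmono : StrictMonoOn (fun t : ℝ => (φ (a + t * (b - a)) / (b - a)).re) (Icc 0 1) := by
    refine strictMonoOn_of_deriv_pos (convex_Icc 0 1)
      (fun t ht => (hder t ht).continuousAt.continuousWithinAt) fun t ht => ?_
    rw [(hder t (interior_subset ht)).deriv]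
    exact hpos _ (hseg t (interior_subset ht))
  have hlt := hmono (left_mem_Icc.mpr zero_le_one) (right_mem_Icc.mpr zero_le_one) zero_lt_one
  simp [hab] at hlt

end NoshiroWarschawski

lemma ball_subset_image_ball_of_le_dist_sphere {α E : Type*} [PseudoMetricSpace α] [ProperSpace α]
    [NormedAddCommGroup E] [NormedSpace ℝ E] {f : α → E} {c : α} {r K : ℝ} (hr : 0 < r)
    (hcont : ContinuousOn f (closedBall c r)) (hopen : IsOpen (f '' ball c r))
    (hK : ∀ z ∈ sphere c r, K ≤ dist (f z) (f c)) : ball (f c) K ⊆ f '' ball c r := by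
  rcases le_or_gt K 0 with hK0 | hK0
  · simp [ball_eq_empty.mpr hK0]
  have hclosure : closure (f '' ball c r) ⊆ f '' closedBall c r :=
    closure_minimal (image_mono ball_subset_closedBall)
      ((isCompact_closedBall c r).image_of_continuousOn hcont).isClosed
  refine (convex_ball (f c) K).isPreconnected.subset_of_closure_inter_subset hopen
    ⟨f c, mem_ball_self hK0, mem_image_of_mem f (mem_ball_self hr)⟩ ?_
  rintro _ ⟨hw, hwK⟩
  obtain ⟨z, hz, rfl⟩ := hclosure hw
  refine mem_image_of_mem f (mem_ball.mpr ((mem_closedBall.mp hz).lt_of_ne fun hzr => ?_))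
  exact (hK z hzr).not_gt hwK

lemma one_div_sqrt_three_lt_one : 1 / √3 < 1 := by
  rw [div_lt_one (by positivity)]
  exact Real.lt_sqrt_of_sq_lt (by norm_num)

lemma ball_one_div_sqrt_three_subset {α : Type*} [PseudoMetricSpace α] {c : α} :
    ball c (1 / √3) ⊆ ball c 1 :=
  ball_subset_ball one_div_sqrt_three_lt_one.le

section Horodisc

/-- The Möbius map `s ↦ √3 (1 - s) / (3 - s)`, carrying the unit disc onto the disc with diameter
`(0, √3 / 2)` and `1` to `0`. Bonk's argument transports Bloch functions through it, because the
weight `1 - ‖z‖ ^ 2` becomes `4 / ‖3 - s‖ ^ 2` on the unit circle. -/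
def horodiscMap (s : ℂ) : ℂ := √3 * (1 - s) / (3 - s)

variable {s : ℂ}

lemma three_sub_ne_zero (hs : ‖s‖ ≤ 1) : 3 - s ≠ 0 := by
  refine sub_ne_zero.mpr fun h => ?_
  norm_num [← h] at hs

lemma one_sub_norm_horodiscMap_sq (hs : s ≠ 3) :
    1 - ‖horodiscMap s‖ ^ 2 = (6 - 2 * ‖s‖ ^ 2) / ‖3 - s‖ ^ 2 := by
  have hne : ‖3 - s‖ ≠ 0 := norm_ne_zero_iff.mpr (sub_ne_zero.mpr hs.symm)
  rw [horodiscMap, norm_div, norm_mul, div_pow, mul_pow, Complex.norm_real, Real.norm_eq_abs,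
    sq_abs, Real.sq_sqrt (by norm_num), one_sub_div (pow_ne_zero 2 hne)]
  congr 1
  simp only [Complex.sq_norm, Complex.normSq_apply, Complex.sub_re, Complex.sub_im, Complex.one_re,
    Complex.one_im, Complex.re_ofNat, Complex.im_ofNat]
  ring

lemma horodiscMap_mem_ball (hs : ‖s‖ ≤ 1) : horodiscMap s ∈ ball (0 : ℂ) 1 := by
  have hne := three_sub_ne_zero hs
  have hpos : 0 < 1 - ‖horodiscMap s‖ ^ 2 := by
    rw [one_sub_norm_horodiscMap_sq (sub_ne_zero.mp hne).symm]
    have : 0 < 6 - 2 * ‖s‖ ^ 2 := by nlinarith [norm_nonneg s]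
    positivity
  exact mem_ball_zero_iff.mpr ((sq_lt_one_iff₀ (norm_nonneg _)).mp (by linarith))

lemma horodiscMap_one : horodiscMap 1 = 0 := by simp [horodiscMap]

lemma hasDerivAt_horodiscMap (hs : s ≠ 3) :
    HasDerivAt horodiscMap (-2 * √3 / (3 - s) ^ 2) s := by
  have hquot := (((hasDerivAt_id s).const_sub 1).const_mul (√3 : ℂ)).div
    ((hasDerivAt_id s).const_sub 3) (sub_ne_zero.mpr hs.symm)
  refine hquot.congr_deriv ?_
  simp only [id]
  ring

end Horodisc

/-- The one-variable functions to which Bonk's theorem applies: holomorphic on the unit disc, with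
derivative `1` at the origin and Bloch seminorm at most `1`. The value at `0` is left free. -/
structure IsNormalizedBloch (φ : ℂ → ℂ) : Prop where
  differentiableOn : DifferentiableOn ℂ φ (ball 0 1)
  deriv_zero : deriv φ 0 = 1
  norm_deriv_le : ∀ z ∈ ball (0 : ℂ) 1, (1 - ‖z‖ ^ 2) * ‖deriv φ z‖ ≤ 1

/-- The derivative of `φ` transported by `horodiscMap`, with the factor `4 / (3 - s) ^ 2` that
makes it bounded by `1` on the unit disc when `φ` is a normalised Bloch function. -/
def blochPullback (φ : ℂ → ℂ) (s : ℂ) : ℂ := deriv φ (horodiscMap s) * (4 / (3 - s) ^ 2)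

namespace IsNormalizedBloch

variable {φ : ℂ → ℂ} {z : ℂ}

lemma differentiableAt (hφ : IsNormalizedBloch φ) (hz : ‖z‖ < 1) : DifferentiableAt ℂ φ z :=
  hφ.differentiableOn.differentiableAt (isOpen_ball.mem_nhds (mem_ball_zero_iff.mpr hz))

lemma differentiableAt_deriv (hφ : IsNormalizedBloch φ) (hz : z ∈ ball (0 : ℂ) 1) :
    DifferentiableAt ℂ (deriv φ) z :=
  (hφ.differentiableOn.deriv isOpen_ball).differentiableAt (isOpen_ball.mem_nhds hz)

lemma rotate (hφ : IsNormalizedBloch φ) {u : ℂ} (hu : ‖u‖ = 1) :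
    IsNormalizedBloch fun z => u⁻¹ * φ (u * z) := by
  have hu0 : u ≠ 0 := norm_ne_zero_iff.mp (hu ▸ one_ne_zero)
  have hderiv : ∀ z, deriv (fun z => u⁻¹ * φ (u * z)) z = deriv φ (u * z) := fun z => by
    rw [deriv_const_mul_field, deriv_comp_mul_left, smul_eq_mul, inv_mul_cancel_left₀ hu0]
  have hmaps : MapsTo (fun z => u * z) (ball (0 : ℂ) 1) (ball 0 1) := fun z hz => by
    simpa [hu] using hz
  refine ⟨(hφ.differentiableOn.comp (by fun_prop) hmaps).const_mul _, ?_, fun z hz => ?_⟩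
  · rw [hderiv, mul_zero, hφ.deriv_zero]
  · simpa [hderiv, hu] using hφ.norm_deriv_le _ (hmaps hz)

lemma re_deriv_deriv_zero (hφ : IsNormalizedBloch φ) : (deriv (deriv φ) 0).re = 0 := by
  have hreal : HasDerivAt (fun t : ℝ => deriv φ t) (deriv (deriv φ) 0) 0 :=
    HasDerivAt.comp_ofReal
      (by simpa using (hφ.differentiableAt_deriv (mem_ball_self one_pos)).hasDerivAt)
  have hweight : HasDerivAt (fun t : ℝ => (1 - t ^ 2) ^ 2) 0 0 :=
    (((hasDerivAt_pow 2 (0 : ℝ)).const_sub 1).pow 2).congr_deriv (by simp)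
  have hmax : IsLocalMax (fun t : ℝ => (1 - t ^ 2) ^ 2 * ‖deriv φ t‖ ^ 2) 0 := by
    filter_upwards [ball_mem_nhds (0 : ℝ) one_pos] with t ht
    have ht' : |t| < 1 := by simpa using ht
    have hle := hφ.norm_deriv_le t (by simpa using ht')
    rw [Complex.norm_real, Real.norm_eq_abs, sq_abs] at hle
    have hnonneg : 0 ≤ 1 - t ^ 2 := by linarith [(sq_lt_one_iff_abs_lt_one t).mpr ht']
    simpa [hφ.deriv_zero, mul_pow] using pow_le_one₀ (n := 2) (by positivity) hle
  simpa [hφ.deriv_zero, Complex.inner] using hmax.hasDerivAt_eq_zero (hweight.mul hreal.norm_sq)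

lemma hasDerivAt_blochPullback (hφ : IsNormalizedBloch φ) {s : ℂ} (hs : ‖s‖ ≤ 1) :
    HasDerivAt (blochPullback φ)
      (deriv (deriv φ) (horodiscMap s) * (-2 * √3 / (3 - s) ^ 2) * (4 / (3 - s) ^ 2) +
        deriv φ (horodiscMap s) * (8 / (3 - s) ^ 3)) s := by
  have hne := three_sub_ne_zero hs
  have hweight : HasDerivAt (fun s : ℂ => 4 / (3 - s) ^ 2) (8 / (3 - s) ^ 3) s := by
    refine ((hasDerivAt_const s (4 : ℂ)).div (((hasDerivAt_id s).const_sub 3).pow 2)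
      (pow_ne_zero 2 hne)).congr_deriv ?_
    simp only [id, Pi.pow_apply]
    field_simp
    norm_num
    ring
  exact ((hφ.differentiableAt_deriv (horodiscMap_mem_ball hs)).hasDerivAt.comp s
    (hasDerivAt_horodiscMap (sub_ne_zero.mp hne).symm)).mul hweight

lemma diffContOnCl_blochPullback (hφ : IsNormalizedBloch φ) :
    DiffContOnCl ℂ (blochPullback φ) (ball 0 1) := by
  refine DifferentiableOn.diffContOnCl fun s hs => ?_
  rw [closure_ball _ one_ne_zero, mem_closedBall_zero_iff] at hs
  exact (hφ.hasDerivAt_blochPullback hs).differentiableAt.differentiableWithinAt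

lemma mapsTo_blochPullback (hφ : IsNormalizedBloch φ) :
    MapsTo (blochPullback φ) (ball 0 1) (closedBall 0 1) := by
  intro z hz
  rw [mem_closedBall_zero_iff]
  refine Complex.norm_le_of_forall_mem_frontier_norm_le isBounded_ball
    hφ.diffContOnCl_blochPullback (fun s hs => ?_) (subset_closure hz)
  have hs1 : ‖s‖ = 1 := by simpa [frontier_ball] using hs
  have hweight : 1 - ‖horodiscMap s‖ ^ 2 = 4 / ‖3 - s‖ ^ 2 := by
    rw [one_sub_norm_horodiscMap_sq (sub_ne_zero.mp (three_sub_ne_zero hs1.le)).symm, hs1]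
    norm_num
  calc ‖blochPullback φ s‖ = (1 - ‖horodiscMap s‖ ^ 2) * ‖deriv φ (horodiscMap s)‖ := by
        rw [hweight, blochPullback, norm_mul, norm_div, norm_pow, Complex.norm_ofNat, mul_comm]
    _ ≤ 1 := hφ.norm_deriv_le _ (horodiscMap_mem_ball hs1.le)

lemma le_re_blochPullback (hφ : IsNormalizedBloch φ) {s : ℝ} (hs : |s| < 1) :
    s ≤ (blochPullback φ s).re := by
  refine le_re_of_boundary_deriv_re_eq_one hφ.diffContOnCl_blochPullback.differentiableOn
    hφ.mapsTo_blochPullback ?_ (hφ.hasDerivAt_blochPullback (by simp)) ?_ hs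
  · rw [blochPullback, horodiscMap_one, hφ.deriv_zero]
    norm_num
  · have hreal : -2 * (√3 : ℂ) / (3 - 1) ^ 2 * (4 / (3 - 1) ^ 2) = ((-√3 / 2 : ℝ) : ℂ) := by
      push_cast
      ring
    rw [horodiscMap_one, hφ.deriv_zero, mul_assoc, hreal, Complex.add_re, Complex.re_mul_ofReal,
      hφ.re_deriv_deriv_zero]
    norm_num

lemma le_re_deriv_ofReal (hφ : IsNormalizedBloch φ) {r : ℝ} (hr0 : 0 < r) (hr : r < √3 / 2) :
    3 * (√3 - 3 * r) / (√3 - r) ^ 3 ≤ (deriv φ r).re := by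
  have hpos : 0 < √3 - r := by linarith [Real.sqrt_nonneg 3]
  obtain ⟨s, hs⟩ : ∃ s, s = (√3 - 3 * r) / (√3 - r) := ⟨_, rfl⟩
  have hthree : 3 - s = 2 * √3 / (√3 - r) := by
    rw [hs]
    field_simp
    ring
  have hmap : horodiscMap s = r := by
    have hreal : √3 * (1 - s) / (3 - s) = r := by
      rw [hthree, hs]
      field_simp
      ring
    rw [horodiscMap, ← hreal]
    push_cast
    rfl
  have hs1 : |s| < 1 := by
    rw [hs, abs_lt, lt_div_iff₀ hpos, div_lt_one hpos]
    constructor <;> linarith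
  have hweight : 4 / (3 - s) ^ 2 = (√3 - r) ^ 2 / 3 := by
    rw [hthree]
    field_simp
    norm_num
  have hle := hφ.le_re_blochPullback hs1
  have hreal : (4 : ℂ) / (3 - s) ^ 2 = ((4 / (3 - s) ^ 2 : ℝ) : ℂ) := by push_cast; rfl
  rw [blochPullback, hmap, hreal, Complex.re_mul_ofReal, hweight, hs, div_le_iff₀ hpos] at hle
  rw [div_le_iff₀ (by positivity)]
  linarith

theorem le_re_deriv (hφ : IsNormalizedBloch φ) (hz : ‖z‖ < √3 / 2) :
    3 * (√3 - 3 * ‖z‖) / (√3 - ‖z‖) ^ 3 ≤ (deriv φ z).re := by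
  rcases eq_or_ne z 0 with rfl | hz0
  · have hcube : √3 ^ 3 = 3 * √3 := by rw [pow_succ, Real.sq_sqrt (by norm_num)]
    simp [hφ.deriv_zero, hcube]
  · have hu : ‖z / ‖z‖‖ = 1 := by simp [hz0]
    have hu0 : z / ‖z‖ ≠ 0 := by simp [hz0]
    have hle := (hφ.rotate hu).le_re_deriv_ofReal (norm_pos_iff.mpr hz0) hz
    rwa [deriv_const_mul_field, deriv_comp_mul_left, smul_eq_mul, inv_mul_cancel_left₀ hu0,
      div_mul_cancel₀ z (by simpa using hz0)] at hle

lemma re_deriv_pos (hφ : IsNormalizedBloch φ) (hz : ‖z‖ < 1 / √3) : 0 < (deriv φ z).re := by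
  have hz3 : ‖z‖ < √3 / 3 := by rwa [Real.sqrt_div_self']
  have hpos : 0 < √3 - ‖z‖ := by linarith [norm_nonneg z]
  refine (div_pos ?_ (by positivity)).trans_le (hφ.le_re_deriv ?_) <;>
    linarith [norm_nonneg z]

theorem injOn (hφ : IsNormalizedBloch φ) : InjOn φ (ball 0 (1 / √3)) := by
  exact injOn_of_forall_re_deriv_pos (convex_ball 0 _)
    (fun z hz => hφ.differentiableAt (mem_ball_zero_iff.mp (ball_one_div_sqrt_three_subset hz)))
    fun z hz => hφ.re_deriv_pos (mem_ball_zero_iff.mp hz)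

lemma le_re_ofReal_sub (hφ : IsNormalizedBloch φ) {r : ℝ} (hr0 : 0 ≤ r) (hr : r < √3 / 2) :
    r * (3 - 2 * √3 * r) / (√3 - r) ^ 2 ≤ (φ r - φ 0).re := by
  have hsqrt : √3 ^ 2 = 3 := Real.sq_sqrt (by norm_num)
  have hnorm : ∀ t ∈ Icc 0 r, ‖(t : ℂ)‖ = t := fun t ht => by simp [abs_of_nonneg ht.1]
  have hder : ∀ t ∈ Icc 0 r, HasDerivAt (fun t : ℝ => (φ t - φ 0).re) (deriv φ t).re t :=
    fun t ht => ((hφ.differentiableAt (by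
      rw [hnorm t ht]
      nlinarith [ht.2])).hasDerivAt.sub_const
        _).real_of_complex
  have hder' : ∀ t ∈ Icc 0 r, HasDerivAt (fun t => t * (3 - 2 * √3 * t) / (√3 - t) ^ 2)
      (3 * (√3 - 3 * t) / (√3 - t) ^ 3) t := fun t ht => by
    have hne : √3 - t ≠ 0 := by linarith [ht.1, ht.2]
    refine (((hasDerivAt_id t).mul (((hasDerivAt_id t).const_mul _).const_sub 3)).div
      (((hasDerivAt_id t).const_sub _).pow 2) (pow_ne_zero 2 hne)).congr_deriv ?_
    simp only [id, Pi.mul_apply, Pi.pow_apply]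
    field_simp
    linear_combination (4 * t ^ 2 - 4 * √3 * t) * hsqrt
  refine image_le_of_deriv_right_le_deriv_boundary
    (fun t ht => (hder' t ht).continuousAt.continuousWithinAt)
    (fun t ht => (hder' t (Ico_subset_Icc_self ht)).hasDerivWithinAt) (by simp)
    (fun t ht => (hder t ht).continuousAt.continuousWithinAt)
    (fun t ht => (hder t (Ico_subset_Icc_self ht)).hasDerivWithinAt) (fun t ht => ?_)
    (right_mem_Icc.mpr hr0)
  have hnt := hnorm t (Ico_subset_Icc_self ht)
  simpa only [hnt] using hφ.le_re_deriv (z := t) (by linarith [ht.2])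

theorem le_dist (hφ : IsNormalizedBloch φ) (hz : ‖z‖ < √3 / 2) :
    ‖z‖ * (3 - 2 * √3 * ‖z‖) / (√3 - ‖z‖) ^ 2 ≤ dist (φ z) (φ 0) := by
  rcases eq_or_ne z 0 with rfl | hz0
  · simp
  · have hu : ‖z / ‖z‖‖ = 1 := by simp [hz0]
    refine ((hφ.rotate hu).le_re_ofReal_sub (norm_nonneg z) hz).trans
      ((Complex.re_le_norm _).trans_eq ?_)
    rw [← mul_sub, norm_mul, norm_inv, hu, inv_one, one_mul, mul_zero,
      div_mul_cancel₀ z (by simpa using hz0), dist_eq_norm]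

theorem ball_subset_image (hφ : IsNormalizedBloch φ) :
    ball (φ 0) (√3 / 4) ⊆ φ '' ball 0 (1 / √3) := by
  have hsub : closedBall (0 : ℂ) (1 / √3) ⊆ ball 0 1 :=
    closedBall_subset_ball one_div_sqrt_three_lt_one
  have hdiff := hφ.differentiableOn.mono hsub
  refine ball_subset_image_ball_of_le_dist_sphere (by positivity) hdiff.continuousOn ?_
    fun z hz => ?_
  · have hanalytic : AnalyticOnNhd ℂ φ (ball 0 (1 / √3)) :=
      (hdiff.mono ball_subset_closedBall).analyticOnNhd isOpen_ball
    rcases hanalytic.is_constant_or_isOpen (convex_ball 0 _).isPreconnected with ⟨w, hw⟩ | hopen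
    · have hr : ((1 / √3 / 2 : ℝ) : ℂ) ∈ ball 0 (1 / √3) := by
        rw [mem_ball_zero_iff, Complex.norm_of_nonneg (by positivity)]
        exact half_lt_self (by positivity)
      have h0 : (0 : ℂ) ∈ ball 0 (1 / √3) := mem_ball_self (by positivity)
      have heq := hφ.injOn hr h0 ((hw _ hr).trans (hw 0 h0).symm)
      exact absurd (Complex.ofReal_eq_zero.mp heq) (by positivity)
    · exact hopen _ subset_rfl isOpen_ball
  · have hr : ‖z‖ = √3 / 3 := by rw [mem_sphere_zero_iff_norm.mp hz, Real.sqrt_div_self']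
    have h3 : 0 < √3 := by positivity
    refine le_trans (le_of_eq ?_) (hφ.le_dist (by linarith))
    have hsqrt : √3 ^ 2 = 3 := Real.sq_sqrt (by norm_num)
    rw [hr, eq_div_iff (pow_ne_zero 2 (by linarith))]
    linear_combination √3 / 3 * hsqrt

end IsNormalizedBloch

section LocalOpenness

variable {X : Type*} [NormedAddCommGroup X] [NormedSpace ℂ X]

lemma exists_mem_ball_eq_zero_of_norm_lt {g : ℂ → ℂ} {c : ℂ} {r : ℝ} (hr : 0 < r)
    (hg : DiffContOnCl ℂ g (ball c r)) (hlt : ∀ z ∈ sphere c r, ‖g c‖ < ‖g z‖) :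
    ∃ z ∈ ball c r, g z = 0 := by
  by_contra! hne
  have hne' : ∀ z ∈ closure (ball c r), g z ≠ 0 := fun z hz => by
    rw [closure_ball c hr.ne', ← ball_union_sphere] at hz
    rcases hz with hz | hz
    · exact hne z hz
    · exact norm_pos_iff.mp ((norm_nonneg _).trans_lt (hlt z hz))
  obtain ⟨z, hz, hmax⟩ := Complex.exists_mem_frontier_isMaxOn_norm isBounded_ball
    ⟨c, mem_ball_self hr⟩ (hg.inv hne')
  rw [frontier_ball c hr.ne'] at hz
  have hle : ‖g c‖⁻¹ ≤ ‖g z‖⁻¹ := by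
    simpa using hmax (subset_closure (mem_ball_self hr))
  exact (hlt z hz).not_ge ((inv_le_inv₀ (norm_pos_iff.mpr (hne c (mem_ball_self hr)))
    ((norm_nonneg _).trans_lt (hlt z hz))).mp hle)

theorem eventually_exists_eq_of_continuousOn {P : Type*} [TopologicalSpace P] {H : P → ℂ → ℂ}
    {p₀ : P} {c₀ : ℂ} {U : Set (P × ℂ)} (hU : IsOpen U) (hmem : (p₀, c₀) ∈ U)
    (hcont : ContinuousOn (uncurry H) U) (hdiff : ∀ q ∈ U, DifferentiableAt ℂ (H q.1) q.2)
    (hne : ∀ᶠ c in 𝓝[≠] c₀, H p₀ c ≠ H p₀ c₀) :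
    ∀ᶠ p in 𝓝 p₀, ∃ c, (p, c) ∈ U ∧ H p c = H p₀ c₀ := by
  have hU₀ : ∀ᶠ c in 𝓝 c₀, (p₀, c) ∈ U :=
    (Continuous.prodMk_right p₀).continuousAt.eventually (hU.mem_nhds hmem)
  obtain ⟨r, hr, hball⟩ := nhds_basis_closedBall.eventually_iff.mp
    (hU₀.and (eventually_nhdsWithin_iff.mp hne))
  have hcontAt : ∀ c ∈ closedBall c₀ r, ContinuousAt (uncurry H) (p₀, c) := fun c hc =>
    hcont.continuousAt (hU.mem_nhds (hball hc).1)
  have hmemU : ∀ᶠ p in 𝓝 p₀, ∀ c ∈ closedBall c₀ r, (p, c) ∈ U :=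
    (isCompact_closedBall c₀ r).eventually_forall_of_forall_eventually fun c hc =>
      hU.mem_nhds (hball hc).1
  have hlt : ∀ᶠ p in 𝓝 p₀, ∀ c ∈ sphere c₀ r, ‖H p c₀ - H p₀ c₀‖ < ‖H p c - H p₀ c₀‖ := by
    refine (isCompact_sphere c₀ r).eventually_forall_of_forall_eventually fun c hc => ?_
    have hcenter : ContinuousAt (fun q : P × ℂ => H q.1 c₀) (p₀, c) :=
      (hcontAt c₀ (mem_closedBall_self hr.le)).comp (x := (p₀, c))
        (f := fun q : P × ℂ => (q.1, c₀)) (by fun_prop)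
    refine (hcenter.sub continuousAt_const).norm.eventually_lt
      ((hcontAt c (sphere_subset_closedBall hc)).sub continuousAt_const).norm ?_
    simpa [sub_eq_zero] using ((hball (sphere_subset_closedBall hc)).2 (ne_of_mem_sphere hc hr.ne'))
  filter_upwards [hmemU, hlt] with p hpU hplt
  have hdiffCl : DiffContOnCl ℂ (fun c => H p c - H p₀ c₀) (ball c₀ r) :=
    DifferentiableOn.diffContOnCl fun c hc =>
      ((hdiff _ (hpU c (closure_ball_subset_closedBall hc))).sub_const _).differentiableWithinAt
  obtain ⟨c, hc, hzero⟩ := exists_mem_ball_eq_zero_of_norm_lt hr hdiffCl hplt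
  exact ⟨c, hpU c (ball_subset_closedBall hc), sub_eq_zero.mp hzero⟩

lemma hasDerivAt_mul_comp_smul {f : X → ℂ} {c : ℂ} {u : X} (hf : DifferentiableAt ℂ f (c • u)) :
    HasDerivAt (fun c : ℂ => c * f (c • u)) (f (c • u) + fderiv ℂ f (c • u) (c • u)) c := by
  have hline : HasDerivAt (fun c : ℂ => c • u) u c := by
    simpa using (hasDerivAt_id c).smul_const u
  refine ((hasDerivAt_id c).mul (hf.hasFDerivAt.comp_hasDerivAt c hline)).congr_deriv ?_
  simp

-- A point `y` near `f x₀ • x₀` has the form `f x • x` with `x = c • v` and `v = (f x₀)⁻¹ • y` as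
-- soon as `c * f (c • v) = f x₀`, an equation for the single complex number `c`.
theorem nhds_le_map_smul_self {f : X → ℂ} {s : Set X} {x₀ : X} (hs : s ∈ 𝓝 x₀)
    (hf : DifferentiableOn ℂ f s) (hfx₀ : f x₀ ≠ 0) (hne : f x₀ + fderiv ℂ f x₀ x₀ ≠ 0) :
    𝓝 (f x₀ • x₀) ≤ map (fun x => f x • x) (𝓝 x₀) := by
  refine le_map fun W hW => ?_
  obtain ⟨V, hVsub, hVopen, hxV⟩ := _root_.mem_nhds_iff.mp (inter_mem hW hs)
  have hfV : ∀ x ∈ V, DifferentiableAt ℂ f x := fun x hx =>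
    hf.differentiableAt (mem_of_superset (hVopen.mem_nhds hx) (hVsub.trans inter_subset_right))
  have hder := hasDerivAt_mul_comp_smul (f := f) (c := 1) (u := x₀)
    (by simpa using hfV x₀ hxV)
  rw [one_smul] at hder
  have hsolve : ∀ᶠ v in 𝓝 x₀, ∃ c : ℂ, c • v ∈ V ∧ c * f (c • v) = f x₀ := by
    have hsmul : Continuous fun q : X × ℂ => q.2 • q.1 := by fun_prop
    have h := eventually_exists_eq_of_continuousOn (H := fun v c => c * f (c • v))
      (c₀ := 1) (p₀ := x₀) (hVopen.preimage hsmul) (by simpa using hxV)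
      (fun q hq => ((continuousAt_snd.mul ((hfV _ hq).continuousAt.comp (x := q)
        (f := fun q : X × ℂ => q.2 • q.1) hsmul.continuousAt))).continuousWithinAt)
      (fun q hq => (hasDerivAt_mul_comp_smul (hfV _ hq)).differentiableAt)
      (hder.eventually_ne hne)
    simpa using h
  have htendsto : Tendsto (fun y : X => (f x₀)⁻¹ • y) (𝓝 (f x₀ • x₀)) (𝓝 x₀) :=
    (continuous_const_smul _).tendsto' _ _ (inv_smul_smul₀ hfx₀ x₀)
  filter_upwards [htendsto.eventually hsolve] with y ⟨c, hcV, hc⟩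
  refine ⟨c • (f x₀)⁻¹ • y, (hVsub hcV).1, ?_⟩
  change f (c • (f x₀)⁻¹ • y) • c • (f x₀)⁻¹ • y = y
  rw [smul_smul _ c, mul_comm, hc, smul_inv_smul₀ hfx₀]

end LocalOpenness

section Biholomorphic

variable {E₁ E₂ : Type*} [NormedAddCommGroup E₁] [NormedSpace ℂ E₁] [NormedAddCommGroup E₂]
  [NormedSpace ℂ E₂] {f g : E₁ → E₂} {s : Set E₁}

theorem IsBiholoOn.congr (hf : IsBiholoOn f s) (hfg : EqOn g f s) : IsBiholoOn g s := by
  obtain ⟨hdiff, hinj, h, hh, hleft⟩ := hf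
  refine ⟨hdiff.congr hfg, hinj.congr hfg.symm, h, ?_, fun x hx => ?_⟩
  · rwa [hfg.image_eq]
  · rw [hfg hx, hleft x hx]

theorem isBiholoOn_of_nhds_le_map (hs : IsOpen s) (hinj : InjOn f s)
    (hf : ∀ x ∈ s, ∃ A : E₁ ≃L[ℂ] E₂, HasFDerivAt f (A : E₁ →L[ℂ] E₂) x)
    (hopen : ∀ x ∈ s, 𝓝 (f x) ≤ map f (𝓝 x)) : IsBiholoOn f s := by
  have hleft : ∀ x ∈ s, invFunOn f s (f x) = x := hinj.leftInvOn_invFunOn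
  have hcont : ∀ x ∈ s, ContinuousAt (invFunOn f s) (f x) := by
    intro x hx
    rw [ContinuousAt, hleft x hx]
    intro W hW
    have himage : f '' (W ∩ s) ∈ 𝓝 (f x) :=
      hopen x hx (image_mem_map (inter_mem hW (hs.mem_nhds hx)))
    rw [mem_map]
    filter_upwards [himage]
    rintro _ ⟨z, ⟨hzW, hzs⟩, rfl⟩
    rwa [mem_preimage, hleft z hzs]
  refine ⟨fun x hx => ?_, hinj, invFunOn f s, ?_, hleft⟩
  · obtain ⟨A, hA⟩ := hf x hx
    exact hA.differentiableAt.differentiableWithinAt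
  · rintro _ ⟨x, hx, rfl⟩
    obtain ⟨A, hA⟩ := hf x hx
    rw [← hleft x hx] at hA
    refine (hA.of_local_left_inverse (hcont x hx) ?_).differentiableAt.differentiableWithinAt
    filter_upwards [hopen x hx (image_mem_map (hs.mem_nhds hx))]
    rintro _ ⟨z, hzs, rfl⟩
    rw [hleft z hzs]

end Biholomorphic

lemma exists_continuousLinearEquiv_eq_smul_id_add_smulRight {𝕜 E : Type*}
    [NontriviallyNormedField 𝕜] [NormedAddCommGroup E] [NormedSpace 𝕜 E] {c : 𝕜} {L : E →L[𝕜] 𝕜}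
    {x : E} (hc : c ≠ 0) (hcL : c + L x ≠ 0) :
    ∃ A : E ≃L[𝕜] E, (A : E →L[𝕜] E) = c • ContinuousLinearMap.id 𝕜 E + L.smulRight x := by
  let A : E →L[𝕜] E := c • ContinuousLinearMap.id 𝕜 E + L.smulRight x
  let B : E →L[𝕜] E := c⁻¹ • (ContinuousLinearMap.id 𝕜 E - (c + L x)⁻¹ • L.smulRight x)
  refine ⟨ContinuousLinearEquiv.equivOfInverse A B (fun v => ?_) (fun v => ?_), rfl⟩
  · simp only [A, B, add_apply, smul_apply, ContinuousLinearMap.id_apply,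
      ContinuousLinearMap.smulRight_apply, sub_apply, map_add, map_smul]
    match_scalars <;> field_simp; ring
  · simp only [A, B, smul_apply, sub_apply, ContinuousLinearMap.id_apply,
      ContinuousLinearMap.smulRight_apply, map_smul, add_apply, map_sub, smul_add]
    match_scalars <;> field_simp; ring

lemma hasFDerivAt_smul_self {𝕜 E : Type*} [NontriviallyNormedField 𝕜] [NormedAddCommGroup E]
    [NormedSpace 𝕜 E] {f : E → 𝕜} {x : E} (hf : DifferentiableAt 𝕜 f x) :
    HasFDerivAt (fun x => f x • x)
      (f x • ContinuousLinearMap.id 𝕜 E + (fderiv 𝕜 f x).smulRight x) x :=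
  hf.hasFDerivAt.smul (hasFDerivAt_id x)

section Bloch

variable {X : Type*} [NormedAddCommGroup X] [NormedSpace ℂ X] {f : X → ℂ} {F : X → X} {x : X}

-- A real supremum over an unbounded family is `0`, which would give `blochNorm F = ‖F 0‖`.
theorem one_sub_norm_sq_mul_norm_fderiv_le (hF : blochNorm F ≠ ‖F 0‖)
    (hx : x ∈ ball (0 : X) 1) :
    (1 - ‖x‖ ^ 2) * ‖fderiv ℂ F x x‖ ≤ (blochNorm F - ‖F 0‖) * ‖x‖ := by
  rcases eq_or_ne x 0 with rfl | hx0
  · simp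
  have hbdd : BddAbove (range fun x : {x : X // x ∈ ball (0 : X) 1 ∧ x ≠ 0} =>
      (1 - ‖x.1‖ ^ 2) * ‖fderiv ℂ F x.1 x.1‖ / ‖x.1‖) := by
    by_contra hunbdd
    exact hF (by rw [blochNorm, Real.iSup_of_not_bddAbove hunbdd, add_zero])
  rw [← div_le_iff₀ (norm_pos_iff.mpr hx0), blochNorm, add_sub_cancel_left]
  exact le_ciSup hbdd ⟨x, hx, hx0⟩

/-- The scalar factors `f` for which `x ↦ f x • x` is a normalised Bloch map of the unit ball. The
last condition is the Bloch bound, since the derivative of `x ↦ f x • x` at `x` in the direction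
`x` is `(f x + fderiv ℂ f x x) • x`. -/
structure IsBlochFactor (f : X → ℂ) : Prop where
  differentiableOn : DifferentiableOn ℂ f (ball 0 1)
  apply_zero : f 0 = 1
  norm_add_fderiv_le : ∀ x ∈ ball (0 : X) 1, (1 - ‖x‖ ^ 2) * ‖f x + fderiv ℂ f x x‖ ≤ 1

theorem isBlochFactor_of_blochNorm_eq_one (hf : DifferentiableOn ℂ f (ball 0 1)) (hf0 : f 0 = 1)
    (hF : EqOn F (fun x => f x • x) (ball 0 1)) (hB : blochNorm F = 1) : IsBlochFactor f := by
  refine ⟨hf, hf0, fun x hx => ?_⟩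
  rcases eq_or_ne x 0 with rfl | hx0
  · simp [hf0]
  have hF0 : ‖F 0‖ = 0 := by simp [hF (mem_ball_self one_pos)]
  have hmem : ball (0 : X) 1 ∈ 𝓝 x := isOpen_ball.mem_nhds hx
  have hderiv : fderiv ℂ F x x = (f x + fderiv ℂ f x x) • x := by
    have hFf : F =ᶠ[𝓝 x] fun x => f x • x := eventually_of_mem hmem hF
    rw [((hasFDerivAt_smul_self (hf.differentiableAt hmem)).congr_of_eventuallyEq hFf).fderiv]
    simp [add_smul]
  have hne : blochNorm F ≠ ‖F 0‖ := by simp [hB, hF0]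
  have hle := one_sub_norm_sq_mul_norm_fderiv_le hne hx
  rw [hderiv, norm_smul, hB, hF0, sub_zero, ← mul_assoc] at hle
  exact le_of_mul_le_mul_right hle (norm_pos_iff.mpr hx0)

lemma exists_norm_eq_one_smul_eq (hx : x ≠ 0) : ∃ u : X, ‖u‖ = 1 ∧ (‖x‖ : ℂ) • u = x :=
  ⟨(‖x‖ : ℂ)⁻¹ • x, norm_smul_inv_norm hx, smul_inv_smul₀ (by simpa using hx) x⟩

namespace IsBlochFactor

lemma differentiableAt (hf : IsBlochFactor f) (hx : x ∈ ball (0 : X) 1) : DifferentiableAt ℂ f x :=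
  hf.differentiableOn.differentiableAt (isOpen_ball.mem_nhds hx)

lemma deriv_slice (hf : IsBlochFactor f) {u : X} {z : ℂ} (hz : z • u ∈ ball (0 : X) 1) :
    deriv (fun z => z * f (z • u)) z = f (z • u) + fderiv ℂ f (z • u) (z • u) :=
  (hasDerivAt_mul_comp_smul (hf.differentiableAt hz)).deriv

theorem isNormalizedBloch_slice (hf : IsBlochFactor f) {u : X} (hu : ‖u‖ = 1) :
    IsNormalizedBloch fun z => z * f (z • u) := by
  have hmem : ∀ z ∈ ball (0 : ℂ) 1, z • u ∈ ball (0 : X) 1 := fun z hz => by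
    simpa [norm_smul, hu] using hz
  refine ⟨fun z hz => ?_, ?_, fun z hz => ?_⟩
  · exact (hasDerivAt_mul_comp_smul
      (hf.differentiableAt (hmem z hz))).differentiableAt.differentiableWithinAt
  · rw [hf.deriv_slice (hmem 0 (mem_ball_self one_pos)), zero_smul, map_zero, hf.apply_zero,
      add_zero]
  · rw [hf.deriv_slice (hmem z hz)]
    simpa [norm_smul, hu] using hf.norm_add_fderiv_le _ (hmem z hz)

lemma add_fderiv_ne_zero (hf : IsBlochFactor f) (hx : x ∈ ball (0 : X) (1 / √3)) :
    f x + fderiv ℂ f x x ≠ 0 := by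
  rcases eq_or_ne x 0 with rfl | hx0
  · simp [hf.apply_zero]
  obtain ⟨u, hu, hxu⟩ := exists_norm_eq_one_smul_eq hx0
  have hpos := (hf.isNormalizedBloch_slice hu).re_deriv_pos (z := ‖x‖) (by simpa using hx)
  rw [hf.deriv_slice (by rw [hxu]; exact ball_one_div_sqrt_three_subset hx), hxu] at hpos
  exact fun h => by simp [h] at hpos

lemma ne_zero (hf : IsBlochFactor f) (hx : x ∈ ball (0 : X) (1 / √3)) : f x ≠ 0 := by
  rcases eq_or_ne x 0 with rfl | hx0
  · simp [hf.apply_zero]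
  obtain ⟨u, hu, hxu⟩ := exists_norm_eq_one_smul_eq hx0
  intro hfx
  have heq := (hf.isNormalizedBloch_slice hu).injOn (x₁ := ‖x‖) (x₂ := 0) (by simpa using hx)
    (mem_ball_self (by positivity)) (by simp [hxu, hfx])
  exact hx0 (by simpa using heq)

theorem injOn_smul_self (hf : IsBlochFactor f) :
    InjOn (fun x => f x • x) (ball (0 : X) (1 / √3)) := by
  intro x hx y hy (hxy : f x • x = f y • y)
  rcases eq_or_ne y 0 with rfl | hy0
  · simpa [hf.ne_zero hx] using hxy
  obtain ⟨u, hu, hyu⟩ := exists_norm_eq_one_smul_eq hy0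
  have hxu : ((f x)⁻¹ * (f y * ‖y‖)) • u = x := by
    rw [mul_smul, mul_smul, hyu, ← hxy, inv_smul_smul₀ (hf.ne_zero hx)]
  have heq := (hf.isNormalizedBloch_slice hu).injOn (x₁ := (f x)⁻¹ * (f y * ‖y‖)) (x₂ := ‖y‖)
    (by rw [← hxu] at hx; simpa [norm_smul, hu] using hx) (by simpa using hy)
    (by simp only [hxu, hyu]; field_simp [hf.ne_zero hx])
  rw [← hxu, heq, hyu]

theorem ball_subset_image_smul_self (hf : IsBlochFactor f) :
    ball (0 : X) (√3 / 4) ⊆ (fun x => f x • x) '' ball (0 : X) (1 / √3) := by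
  intro y hy
  rcases eq_or_ne y 0 with rfl | hy0
  · exact ⟨0, mem_ball_self (by positivity), smul_zero _⟩
  obtain ⟨u, hu, hyu⟩ := exists_norm_eq_one_smul_eq hy0
  obtain ⟨z, hz, hzy : z * f (z • u) = ‖y‖⟩ :=
    (hf.isNormalizedBloch_slice hu).ball_subset_image (a := ‖y‖) (by simpa using hy)
  refine ⟨z • u, by simpa [norm_smul, hu] using hz, ?_⟩
  change f (z • u) • z • u = y
  rw [smul_smul, mul_comm, hzy, hyu]

theorem isBiholoOn_smul_self (hf : IsBlochFactor f) :
    IsBiholoOn (fun x => f x • x) (ball (0 : X) (1 / √3)) := by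
  refine isBiholoOn_of_nhds_le_map isOpen_ball hf.injOn_smul_self (fun x hx => ?_) fun x hx => ?_
  · obtain ⟨A, hA⟩ := exists_continuousLinearEquiv_eq_smul_id_add_smulRight (hf.ne_zero hx)
      (hf.add_fderiv_ne_zero hx)
    exact ⟨A, hA ▸ hasFDerivAt_smul_self (hf.differentiableAt (ball_one_div_sqrt_three_subset hx))⟩
  · exact nhds_le_map_smul_self (isOpen_ball.mem_nhds (ball_one_div_sqrt_three_subset hx))
      hf.differentiableOn (hf.ne_zero hx) (hf.add_fderiv_ne_zero hx)

end IsBlochFactor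

end Bloch

theorem stmt16_general {X : Type*} [NormedAddCommGroup X] [NormedSpace ℂ X]
    (f : X → ℂ) (hf : DifferentiableOn ℂ f (ball (0 : X) 1)) (hf0 : f 0 = 1)
    (F : X → X) (hF : ∀ x ∈ ball (0 : X) 1, F x = f x • x)
    (hB : blochNorm F = 1) :
    IsBiholoOn F (ball (0 : X) (1 / Real.sqrt 3)) ∧
      ball (0 : X) (Real.sqrt 3 / 4) ⊆ F '' ball (0 : X) (1 / Real.sqrt 3) := by
  have hfactor : IsBlochFactor f := isBlochFactor_of_blochNorm_eq_one hf hf0 hF hB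
  have hEq : EqOn F (fun x => f x • x) (ball (0 : X) (1 / √3)) :=
    fun x hx => hF x (ball_one_div_sqrt_three_subset hx)
  refine ⟨hfactor.isBiholoOn_smul_self.congr hEq, ?_⟩
  rw [hEq.image_eq]
  exact hfactor.ball_subset_image_smul_self

/-- **Lower bound for the Bloch constant.** Let `F(x) = f(x)·x` on the unit ball `𝔹` of a
complex Banach space, with `f` holomorphic, `f(0) = 1` and `‖F‖_B = 1`. Then `F` is
biholomorphic on the ball `B_{1/√3}` and `F(B_{1/√3})` contains the ball `B_{√3/4}`. -/
theorem stmt16 {X : Type*} [NormedAddCommGroup X] [NormedSpace ℂ X] [CompleteSpace X]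
    (f : X → ℂ) (hf : DifferentiableOn ℂ f (ball (0 : X) 1)) (hf0 : f 0 = 1)
    (F : X → X) (hF : ∀ x ∈ ball (0 : X) 1, F x = f x • x)
    (hB : blochNorm F = 1) :
    IsBiholoOn F (ball (0 : X) (1 / Real.sqrt 3)) ∧
      ball (0 : X) (Real.sqrt 3 / 4) ⊆ F '' ball (0 : X) (1 / Real.sqrt 3) :=
  stmt16_general f hf hf0 F hF hB
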